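/- Let X, Y, Z be jointly Gaussian random vectors with Cov(Y) invertible. Then X → Y → Z forms a Markov chain if and only if Cov(X,Z) = Cov(X,Y)·Cov(Y)^{-1}·Cov(Y,Z). -/

import Mathlib

open MeasureTheory ProbabilityTheory Matrix Finset

variable {Ω : Type*} [MeasurableSpace Ω]

/-- The cross-covariance matrix `E[(f − E f)(g − E g)ᵀ]` of two random
vectors. -/
noncomputable def crossCov {p r : ℕ} (μ : Measure Ω) (f : Ω → Fin p → ℝ)
    (g : Ω → Fin r → ℝ) : Matrix (Fin p) (Fin r) ℝ :=
  fun i j => ∫ ω, (f ω i - ∫ ω', f ω' i ∂μ) * (g ω j - ∫ ω', g ω' j ∂μ) ∂μ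

/-- `X, Y, Z` are jointly Gaussian: every real linear combination of their
coordinates has a (possibly degenerate) Gaussian distribution. -/
def JointlyGaussian {p q r : ℕ} (μ : Measure Ω) (X : Ω → Fin p → ℝ)
    (Y : Ω → Fin q → ℝ) (Z : Ω → Fin r → ℝ) : Prop :=
  ∀ (a : Fin p → ℝ) (b : Fin q → ℝ) (c : Fin r → ℝ), ∃ (m : ℝ) (v : NNReal),
    Measure.map
      (fun ω => (∑ i, a i * X ω i) + (∑ i, b i * Y ω i) + (∑ i, c i * Z ω i)) μ
      = gaussianReal m v

/-!
Let `A` solve the normal equations `A Cov(Y) = Cov(X,Y)` of the regression of `X` on `Y`; for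
invertible `Cov(Y)`, `A = Cov(X,Y) Cov(Y)⁻¹`. The residual `U = X - A Y` is uncorrelated with `Y`,
hence independent of `Y`. Given `Y`, the vectors `X` and `U` differ by a constant, so `X → Y → Z`
holds iff `U` and `Z` are conditionally independent given `Y`; as `U` is independent of `Y`, this
means that `U` is independent of the pair `(Y, Z)`. For Gaussian vectors that reduces to
`0 = Cov(U,Z) = Cov(X,Z) - A Cov(Y,Z)`.
-/

section ConditionalIndependence

variable {β β' γ δ : Type*} [MeasurableSpace β] [MeasurableSpace β'] [MeasurableSpace γ]
  [MeasurableSpace δ] {μ : Measure Ω} [IsFiniteMeasure μ]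

lemma map_compProd_eq_map_compProd_comap (ν : Measure β) [SFinite ν] (κ : Kernel β' δ)
    [IsSFiniteKernel κ] {φ : β → β'} (hφ : Measurable φ) :
    ν.map φ ⊗ₘ κ = (ν ⊗ₘ κ.comap φ hφ).map (Prod.map φ id) := by
  ext s hs
  rw [Measure.map_apply (hφ.prodMap measurable_id) hs,
    Measure.compProd_apply (hφ.prodMap measurable_id hs), Measure.compProd_apply hs,
    lintegral_map (Kernel.measurable_kernel_prodMk_left hs) hφ]
  rfl

lemma condDistrib_ae_eq_const_of_indepFun [StandardBorelSpace δ] [Nonempty δ] {Y : Ω → γ}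
    {U : Ω → δ} (hY : AEMeasurable Y μ) (hU : AEMeasurable U μ) (h : Y ⟂ᵢ[μ] U) :
    condDistrib U Y μ =ᵐ[μ.map Y] Kernel.const γ (μ.map U) := by
  rw [condDistrib_ae_eq_iff_measure_eq_compProd Y hU, Measure.compProd_const]
  exact (indepFun_iff_map_prod_eq_prod_map_map hY hU).1 h

variable [StandardBorelSpace Ω]

lemma condIndepFun_comp_prodMk_left [StandardBorelSpace β] [Nonempty β] [StandardBorelSpace β']
    [Nonempty β'] [StandardBorelSpace δ] [Nonempty δ] {X : Ω → β} {Y : Ω → γ} {Z : Ω → δ}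
    (hX : Measurable X) (hY : Measurable Y) (hZ : Measurable Z) {f : γ × β → β'}
    (hf : Measurable f) (h : X ⟂ᵢ[Y, hY; μ] Z) :
    (fun ω ↦ f (Y ω, X ω)) ⟂ᵢ[Y, hY; μ] Z := by
  let φ : γ × β → γ × β' := fun p ↦ (p.1, f p)
  have hφ : Measurable φ := measurable_fst.prodMk hf
  have hYX : Measurable fun ω ↦ (Y ω, X ω) := hY.prodMk hX
  rw [condIndepFun_iff_condDistrib_prod_ae_eq_prodMkRight hZ hX hY,
    condDistrib_ae_eq_iff_measure_eq_compProd _ hZ.aemeasurable] at h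
  rw [condIndepFun_iff_condDistrib_prod_ae_eq_prodMkRight hZ (hf.fun_comp hYX) hY,
    condDistrib_ae_eq_iff_measure_eq_compProd _ hZ.aemeasurable]
  calc μ.map (fun ω ↦ (φ (Y ω, X ω), Z ω))
      = (μ.map fun ω ↦ ((Y ω, X ω), Z ω)).map (Prod.map φ id) :=
        (Measure.map_map (hφ.prodMap measurable_id) (hYX.prodMk hZ)).symm
    _ = (μ.map fun ω ↦ (Y ω, X ω)).map φ ⊗ₘ (condDistrib Z Y μ).prodMkRight β' := by
        rw [h, map_compProd_eq_map_compProd_comap _ _ hφ]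
        rfl
    _ = μ.map (fun ω ↦ φ (Y ω, X ω)) ⊗ₘ (condDistrib Z Y μ).prodMkRight β' := by
        rw [Measure.map_map hφ hYX, Function.comp_def]

lemma condIndepFun_sub_comp_left_iff {E : Type*} [AddGroup E] [MeasurableSpace E]
    [MeasurableAdd₂ E] [MeasurableSub₂ E] [StandardBorelSpace E] [StandardBorelSpace δ] [Nonempty δ]
    {X : Ω → E} {Y : Ω → γ} {Z : Ω → δ} (hX : Measurable X) (hY : Measurable Y)
    (hZ : Measurable Z) {g : γ → E} (hg : Measurable g) :
    (fun ω ↦ X ω - g (Y ω)) ⟂ᵢ[Y, hY; μ] Z ↔ X ⟂ᵢ[Y, hY; μ] Z := by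
  refine ⟨fun h ↦ ?_, condIndepFun_comp_prodMk_left hX hY hZ (f := fun p ↦ p.2 - g p.1)
    (by fun_prop)⟩
  simpa only [sub_add_cancel] using
    condIndepFun_comp_prodMk_left (hX.fun_sub (hg.fun_comp hY)) hY hZ (f := fun p ↦ p.2 + g p.1)
      (by fun_prop) h

lemma condIndepFun_iff_indepFun_prodMk_right [StandardBorelSpace β] [Nonempty β]
    [StandardBorelSpace δ] [Nonempty δ] {U : Ω → β} {Y : Ω → γ} {Z : Ω → δ} (hU : Measurable U)
    (hY : Measurable Y) (hZ : Measurable Z) (h : U ⟂ᵢ[μ] Y) :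
    U ⟂ᵢ[Y, hY; μ] Z ↔ U ⟂ᵢ[μ] (fun ω ↦ (Y ω, Z ω)) := by
  have hYZ : Measurable fun ω ↦ (Y ω, Z ω) := hY.prodMk hZ
  have hconst : (condDistrib U Y μ).prodMkRight δ =ᵐ[μ.map fun ω ↦ (Y ω, Z ω)]
      Kernel.const (γ × δ) (μ.map U) := by
    have hU_const := condDistrib_ae_eq_const_of_indepFun hY.aemeasurable hU.aemeasurable h.symm
    have hmap : μ.map Y = (μ.map fun ω ↦ (Y ω, Z ω)).map Prod.fst := by
      rw [Measure.map_map measurable_fst hYZ, Function.comp_def]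
    rw [hmap] at hU_const
    exact ae_of_ae_map measurable_fst.aemeasurable hU_const
  calc U ⟂ᵢ[Y, hY; μ] Z
      ↔ Z ⟂ᵢ[Y, hY; μ] U := ⟨CondIndepFun.symm, CondIndepFun.symm⟩
    _ ↔ μ.map (fun ω ↦ ((Y ω, Z ω), U ω)) =
          μ.map (fun ω ↦ (Y ω, Z ω)) ⊗ₘ (condDistrib U Y μ).prodMkRight δ := by
        rw [condIndepFun_iff_condDistrib_prod_ae_eq_prodMkRight hU hZ hY,
          condDistrib_ae_eq_iff_measure_eq_compProd _ hU.aemeasurable]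
    _ ↔ (fun ω ↦ (Y ω, Z ω)) ⟂ᵢ[μ] U := by
        rw [Measure.compProd_congr hconst, Measure.compProd_const,
          indepFun_iff_map_prod_eq_prod_map_map hYZ.aemeasurable hU.aemeasurable]
    _ ↔ U ⟂ᵢ[μ] (fun ω ↦ (Y ω, Z ω)) := ⟨IndepFun.symm, IndepFun.symm⟩

end ConditionalIndependence

section Gaussian

variable {E F G : Type*} [NormedAddCommGroup E] [NormedSpace ℝ E] [MeasurableSpace E] [BorelSpace E]
  [NormedAddCommGroup F] [NormedSpace ℝ F] [MeasurableSpace F] [BorelSpace F]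
  [NormedAddCommGroup G] [NormedSpace ℝ G] [MeasurableSpace G] [BorelSpace G] {μ : Measure Ω}

lemma covariance_strongDual_eq_zero_of_indepFun {U : Ω → E} {V : Ω → F}
    (hU : HasGaussianLaw U μ) (hV : HasGaussianLaw V μ) (h : U ⟂ᵢ[μ] V)
    (L : StrongDual ℝ E) (M : StrongDual ℝ F) : cov[L ∘ U, M ∘ V; μ] = 0 :=
  (h.comp L.measurable M.measurable).covariance_eq_zero (hU.map L).memLp_two (hV.map M).memLp_two

lemma hasGaussianLaw_sub_clm_prodMk [SecondCountableTopology F] {X : Ω → E} {W : Ω → F}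
    (h : HasGaussianLaw (fun ω ↦ (X ω, W ω)) μ) (T : F →L[ℝ] E) :
    HasGaussianLaw (fun ω ↦ (X ω - T (W ω), W ω)) μ :=
  h.map_fun (ContinuousLinearMap.prod (.fst ℝ E F - T ∘L .snd ℝ E F) (.snd ℝ E F))

variable [CompleteSpace E] [SecondCountableTopology E] [CompleteSpace F]
  [SecondCountableTopology F] [CompleteSpace G] [SecondCountableTopology G]

lemma indepFun_prodMk_right_iff_of_hasGaussianLaw {U : Ω → E} {Y : Ω → F} {Z : Ω → G}
    (h : HasGaussianLaw (fun ω ↦ (U ω, Y ω, Z ω)) μ) :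
    U ⟂ᵢ[μ] (fun ω ↦ (Y ω, Z ω)) ↔ U ⟂ᵢ[μ] Y ∧ U ⟂ᵢ[μ] Z := by
  refine ⟨fun hind ↦ ⟨hind.comp measurable_id measurable_fst, hind.comp measurable_id
    measurable_snd⟩, fun ⟨hUY, hUZ⟩ ↦ h.indepFun_of_covariance_strongDual fun L M ↦ ?_⟩
  have := h.isProbabilityMeasure
  have hU := h.fst
  have hY := h.snd.fst
  have hZ := h.snd.snd
  have hM : M ∘ (fun ω ↦ (Y ω, Z ω)) = (M ∘L .inl ℝ F G) ∘ Y + (M ∘L .inr ℝ F G) ∘ Z := by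
    ext ω
    exact (M.comp_inl_add_comp_inr (Y ω, Z ω)).symm
  rw [hM, covariance_add_right (hU.map L).memLp_two (hY.map _).memLp_two (hZ.map _).memLp_two,
    covariance_strongDual_eq_zero_of_indepFun hU hY hUY,
    covariance_strongDual_eq_zero_of_indepFun hU hZ hUZ, add_zero]

end Gaussian

section CrossCovariance

variable {p q r : ℕ} {μ : Measure Ω} {X : Ω → Fin p → ℝ} {Y : Ω → Fin q → ℝ} {Z : Ω → Fin r → ℝ}

lemma crossCov_apply (i : Fin p) (j : Fin r) :
    crossCov μ X Z i j = cov[fun ω ↦ X ω i, fun ω ↦ Z ω j; μ] := rfl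

lemma crossCov_sub_mulVec_left [IsFiniteMeasure μ] (hX : ∀ i, MemLp (fun ω ↦ X ω i) 2 μ)
    (hY : ∀ i, MemLp (fun ω ↦ Y ω i) 2 μ) (hZ : ∀ i, MemLp (fun ω ↦ Z ω i) 2 μ)
    (A : Matrix (Fin p) (Fin q) ℝ) :
    crossCov μ (fun ω ↦ X ω - A *ᵥ Y ω) Z = crossCov μ X Z - A * crossCov μ Y Z := by
  ext i j
  have hAY (k : Fin q) : MemLp (fun ω ↦ A i k * Y ω k) 2 μ := (hY k).const_mul _
  simp only [crossCov_apply, Matrix.sub_apply, Matrix.mul_apply, Pi.sub_apply, mulVec, dotProduct]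
  rw [covariance_fun_sub_left (hX i) (memLp_finsetSum _ fun k _ ↦ hAY k) (hZ j),
    covariance_fun_sum_left hAY (hZ j)]
  simp only [covariance_const_mul_left]

lemma indepFun_iff_crossCov_eq_zero (h : HasGaussianLaw (fun ω ↦ (X ω, Z ω)) μ) :
    X ⟂ᵢ[μ] Z ↔ crossCov μ X Z = 0 := by
  refine ⟨fun hind ↦ ?_, fun hcov ↦
    HasGaussianLaw.indepFun_of_covariance_eval (X := fun i ω ↦ X ω i) (Y := fun j ω ↦ Z ω j) h
      fun i j ↦ congrFun₂ hcov i j⟩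
  ext i j
  exact (hind.comp (measurable_pi_apply i) (measurable_pi_apply j)).covariance_eq_zero
    (h.fst.eval i).memLp_two (h.snd.eval j).memLp_two

lemma JointlyGaussian.hasGaussianLaw (hX : AEMeasurable X μ) (hY : AEMeasurable Y μ)
    (hZ : AEMeasurable Z μ) (h : JointlyGaussian μ X Y Z) :
    HasGaussianLaw (fun ω ↦ (X ω, Y ω, Z ω)) μ := by
  refine ⟨isGaussian_of_map_eq_gaussianReal fun L ↦ ?_⟩
  have hcoeff {n : ℕ} (M : StrongDual ℝ (Fin n → ℝ)) : ∃ a : Fin n → ℝ, ∀ x, ∑ i, a i * x i = M x :=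
    ((dotProductEquiv ℝ (Fin n)).surjective M.toLinearMap).imp fun _ ha ↦ DFunLike.congr_fun ha
  obtain ⟨a, ha⟩ := hcoeff (L ∘L .inl ℝ _ _)
  obtain ⟨b, hb⟩ := hcoeff ((L ∘L .inr ℝ _ _) ∘L .inl ℝ _ _)
  obtain ⟨c, hc⟩ := hcoeff ((L ∘L .inr ℝ _ _) ∘L .inr ℝ _ _)
  have hL : L ∘ (fun ω ↦ (X ω, Y ω, Z ω)) =
      fun ω ↦ ∑ i, a i * X ω i + ∑ i, b i * Y ω i + ∑ i, c i * Z ω i := by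
    ext ω
    rw [ha, hb, hc, add_assoc, ContinuousLinearMap.comp_inl_add_comp_inr _ (Y ω, Z ω),
      ContinuousLinearMap.comp_inl_add_comp_inr _ (X ω, Y ω, Z ω), Function.comp_apply]
  rw [AEMeasurable.map_map_of_aemeasurable (by fun_prop) (by fun_prop), hL]
  exact h a b c

end CrossCovariance

theorem stmt13_general [StandardBorelSpace Ω] {p q r : ℕ} (μ : Measure Ω) [IsFiniteMeasure μ]
    (X : Ω → Fin p → ℝ) (Y : Ω → Fin q → ℝ) (Z : Ω → Fin r → ℝ)
    (hX : Measurable X) (hY : Measurable Y) (hZ : Measurable Z) (hGauss : JointlyGaussian μ X Y Z)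
    (A : Matrix (Fin p) (Fin q) ℝ) (hA : A * crossCov μ Y Y = crossCov μ X Y) :
    CondIndepFun (MeasurableSpace.comap Y inferInstance) hY.comap_le X Z μ ↔
      crossCov μ X Z = A * crossCov μ Y Z := by
  let U : Ω → Fin p → ℝ := fun ω ↦ X ω - A *ᵥ Y ω
  let T : (Fin q → ℝ) →L[ℝ] (Fin p → ℝ) := A.mulVecLin.toContinuousLinearMap
  have hAmeas : Measurable (A *ᵥ ·) := T.measurable
  have hU : Measurable U := hX.sub (hAmeas.comp hY)
  have hXYZ := hGauss.hasGaussianLaw hX.aemeasurable hY.aemeasurable hZ.aemeasurable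
  have hUYZ : HasGaussianLaw (fun ω ↦ (U ω, Y ω, Z ω)) μ :=
    hasGaussianLaw_sub_clm_prodMk hXYZ (T ∘L .fst ℝ _ _)
  have hUY : HasGaussianLaw (fun ω ↦ (U ω, Y ω)) μ :=
    hUYZ.map_fun (.prodMap (.id ℝ _) (.fst ℝ _ _))
  have hUZ : HasGaussianLaw (fun ω ↦ (U ω, Z ω)) μ :=
    hUYZ.map_fun (.prodMap (.id ℝ _) (.snd ℝ _ _))
  have hcov {n : ℕ} {W : Ω → Fin n → ℝ} (hW : HasGaussianLaw W μ) :
      crossCov μ U W = crossCov μ X W - A * crossCov μ Y W :=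
    crossCov_sub_mulVec_left (fun i ↦ (hXYZ.fst.eval i).memLp_two)
      (fun i ↦ (hXYZ.snd.fst.eval i).memLp_two) (fun i ↦ (hW.eval i).memLp_two) A
  have hindep : U ⟂ᵢ[μ] Y :=
    (indepFun_iff_crossCov_eq_zero hUY).2 (by rw [hcov hXYZ.snd.fst, hA, sub_self])
  calc X ⟂ᵢ[Y, hY; μ] Z
      ↔ U ⟂ᵢ[Y, hY; μ] Z := (condIndepFun_sub_comp_left_iff hX hY hZ hAmeas).symm
    _ ↔ U ⟂ᵢ[μ] (fun ω ↦ (Y ω, Z ω)) := condIndepFun_iff_indepFun_prodMk_right hU hY hZ hindep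
    _ ↔ U ⟂ᵢ[μ] Z := by
        rw [indepFun_prodMk_right_iff_of_hasGaussianLaw hUYZ, and_iff_right hindep]
    _ ↔ crossCov μ X Z = A * crossCov μ Y Z := by
        rw [indepFun_iff_crossCov_eq_zero hUZ, hcov hXYZ.snd.snd, sub_eq_zero]

/-- For jointly Gaussian random vectors `X, Y, Z` with `Cov(Y)` invertible,
`X → Y → Z` is a Markov chain (i.e. `X` and `Z` are conditionally independent
given `Y`) iff `Cov(X,Z) = Cov(X,Y) Cov(Y)⁻¹ Cov(Y,Z)`. -/
theorem stmt13 [StandardBorelSpace Ω] {p q r : ℕ} (μ : Measure Ω)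
    [IsProbabilityMeasure μ]
    (X : Ω → Fin p → ℝ) (Y : Ω → Fin q → ℝ) (Z : Ω → Fin r → ℝ)
    (hX : Measurable X) (hY : Measurable Y) (hZ : Measurable Z)
    (hGauss : JointlyGaussian μ X Y Z)
    (hcov : IsUnit (crossCov μ Y Y)) :
    CondIndepFun (MeasurableSpace.comap Y inferInstance) (hY.comap_le) X Z μ ↔
      crossCov μ X Z = crossCov μ X Y * (crossCov μ Y Y)⁻¹ * crossCov μ Y Z :=
  stmt13_general μ X Y Z hX hY hZ hGauss (crossCov μ X Y * (crossCov μ Y Y)⁻¹)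
    (nonsing_inv_mul_cancel_right _ _ ((isUnit_iff_isUnit_det _).1 hcov))
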